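/- Let ρ₀ > 0 and M > 0, and let f be a 2π-periodic function that extends to a function analytic on the open strip {z ∈ ℂ : |Im z| < ρ₀} with |f(z)| ≤ M there. Let 0 ≤ α < 1/4, N a positive integer, x̃_{−N},…,x̃_N a set of α-perturbed nodes, and w̃_{−N},…,w̃_N the unique quadrature weights exact on T_N at these nodes. Then |Σ_{j=−N}^{N} w̃_j f(x̃_j) − ∫_{−π}^{π} f(x) dx| ≤ (16Mπ/(cos(πα) − sin(πα))) · e^{−ρ₀ N}/(e^{ρ₀} − 1). -/

import Mathlib

open Real Finset

/-- `q` is a trigonometric polynomial of degree ≤ N. -/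
def IsTrigPoly (N : ℕ) (q : ℝ → ℂ) : Prop :=
  ∃ c : ℤ → ℂ, ∀ x : ℝ,
    q x = ∑ k ∈ Finset.Icc (-(N:ℤ)) (N:ℤ), c k * Complex.exp (Complex.I * (k : ℂ) * (x : ℂ))

/-- `x` is a set of α-perturbed nodes of size 2N+1. -/
def PerturbedNodes (N : ℕ) (α : ℝ) (x : ℤ → ℝ) : Prop :=
  ∀ j ∈ Finset.Icc (-(N:ℤ)) (N:ℤ),
    |x j - (j : ℝ) * (2*π/(2*N+1))| ≤ α * (2*π/(2*N+1))

/-- The weights `w` form a quadrature rule at the nodes `x` that is exact on `T_N`. -/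
def ExactQuad (N : ℕ) (x : ℤ → ℝ) (w : ℤ → ℝ) : Prop :=
  ∀ q : ℝ → ℂ, IsTrigPoly N q →
    ∑ j ∈ Finset.Icc (-(N:ℤ)) (N:ℤ), (w j : ℂ) * q (x j) = ∫ t in (-π)..π, q t

/-- Pointwise convergence of an absolutely summable Fourier series on `[-π, π]`. -/
lemma hasSum_fourier_of_summable {g : ℝ → ℂ} (hg : ContinuousOn g (Set.Icc (-π) π))
    (hgp : g (-π) = g π) {c : ℤ → ℂ}
    (hc : ∀ n : ℤ, (2 * π : ℂ) * c n =
      ∫ t in (-π)..π, Complex.exp (-(Complex.I * n * t)) * g t)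
    (hs : Summable c) {t : ℝ} (ht : t ∈ Set.Icc (-π) π) :
    HasSum (fun n : ℤ => c n * Complex.exp (Complex.I * n * t)) (g t) := by
  have hp : Fact (0 < 2 * π) := ⟨Real.two_pi_pos⟩
  have hend : -π + 2 * π = π := by ring
  have hπ : (π : ℂ) ≠ 0 := by exact_mod_cast Real.pi_ne_zero
  let G : C(AddCircle (2 * π), ℂ) :=
    ⟨AddCircle.liftIco (2 * π) (-π) g,
      AddCircle.liftIco_continuous (by rw [hend, hgp]) (by rwa [hend])⟩
  have hval : ∀ s ∈ Set.Icc (-π) π, G (s : AddCircle (2 * π)) = g s := by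
    intro s hs
    rcases eq_or_lt_of_le hs.2 with h | h
    · have : (s : AddCircle (2 * π)) = ((-π : ℝ) : AddCircle (2 * π)) := by
        rw [h, ← AddCircle.coe_add_period (2 * π) (-π), hend]
      change AddCircle.liftIco (2 * π) (-π) g _ = _
      rw [this, AddCircle.liftIco_coe_apply, hgp, h]
      constructor <;> linarith [Real.pi_pos]
    · exact AddCircle.liftIco_coe_apply ⟨hs.1, by rwa [hend]⟩
  have hcoef : fourierCoeff G = c := by
    funext n
    rw [fourierCoeff_eq_intervalIntegral _ n (-π), hend]
    have : ∫ s in (-π)..π, (fourier (-n) (s : AddCircle (2 * π))) • G (s : AddCircle (2 * π)) =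
        ∫ s in (-π)..π, Complex.exp (-(Complex.I * n * s)) * g s := by
      refine intervalIntegral.integral_congr fun s hs => ?_
      rw [Set.uIcc_of_le (by linarith [Real.pi_pos])] at hs
      simp only [smul_eq_mul]
      rw [hval s hs, fourier_coe_apply]
      congr 2
      push_cast
      field_simp
    rw [this, ← hc n, Complex.real_smul]
    push_cast
    field_simp
  have key := has_pointwise_sum_fourier_series_of_summable (f := G) (by rwa [hcoef]) (t : ℝ)
  rw [hcoef, hval t ht] at key
  convert key using 2 with n
  rw [fourier_coe_apply, smul_eq_mul]
  congr 2
  push_cast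
  field_simp

/-- The integral of a nonconstant complex exponential over `[-π, π]`. -/
lemma integral_exp_I_mul {s : ℝ} (hs : s ≠ 0) :
    ∫ t in (-π)..π, Complex.exp (Complex.I * s * t) = ((2 * Real.sin (s * π) / s : ℝ) : ℂ) := by
  have hs' : (s : ℂ) ≠ 0 := by exact_mod_cast hs
  rw [integral_exp_mul_complex (mul_ne_zero Complex.I_ne_zero hs')]
  push_cast
  rw [Complex.sin]
  have h1 : Complex.I * s * π = s * π * Complex.I := by ring
  have h2 : Complex.I * s * -π = -(s * π) * Complex.I := by ring
  rw [h1, h2]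
  have := Complex.I_ne_zero
  have hI := Complex.I_sq
  field_simp
  rw [hI]
  ring

/-- The Fourier coefficients of `t ↦ cos (δ t)` on `[-π, π]`. -/
noncomputable def cosCoeff (δ : ℝ) (n : ℤ) : ℝ :=
  if n = 0 then (2 * π)⁻¹ * ∫ t in (-π)..π, Real.cos (δ * t)
  else (-1) ^ n * (-(δ * Real.sin (π * δ) / (π * ((n : ℝ) ^ 2 - δ ^ 2))))

/-- The moduli of the Fourier coefficients of `t ↦ exp (I t / 2) * sin (δ t)` on `[-π, π]`. -/
noncomputable def sinCoeff (δ : ℝ) (n : ℤ) : ℝ :=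
  δ * Real.cos (π * δ) / (π * (((n : ℝ) - 1 / 2) ^ 2 - δ ^ 2))

lemma one_le_intCast_sq {n : ℤ} (hn : n ≠ 0) : (1 : ℝ) ≤ (n : ℝ) ^ 2 := by
  have : 1 ≤ n ^ 2 := Int.add_one_le_iff.mpr (sq_pos_of_ne_zero hn)
  exact_mod_cast this

lemma quarter_le_intCast_sub_half_sq (n : ℤ) : (1 / 4 : ℝ) ≤ ((n : ℝ) - 1 / 2) ^ 2 := by
  have : 0 ≤ n * (n - 1) := by
    rcases le_or_gt n 0 with h | h
    · exact mul_nonneg_of_nonpos_of_nonpos h (by omega)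
    · exact mul_nonneg h.le (by omega)
  have : (0 : ℝ) ≤ n * (n - 1) := by exact_mod_cast this
  linarith [show ((n : ℝ) - 1 / 2) ^ 2 = n * (n - 1) + 1 / 4 by ring]

lemma sq_le_one_div_sixteen {δ : ℝ} (hδ : |δ| ≤ 1 / 4) : δ ^ 2 ≤ 1 / 16 := by
  rw [← sq_abs]
  nlinarith [abs_nonneg δ]

lemma integral_exp_mul_cos {δ : ℝ} (hδ : |δ| ≤ 1 / 4) (n : ℤ) :
    (2 * π : ℂ) * (cosCoeff δ n : ℂ) =
      ∫ t in (-π)..π, Complex.exp (-(Complex.I * n * t)) * (Real.cos (δ * t) : ℂ) := by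
  have hπ : (π : ℂ) ≠ 0 := by exact_mod_cast Real.pi_ne_zero
  unfold cosCoeff
  split_ifs with hn
  · subst hn
    simp only [Int.cast_zero, mul_zero, zero_mul, neg_zero, Complex.exp_zero, one_mul]
    rw [intervalIntegral.integral_ofReal]
    push_cast
    field_simp
  · have hn1 := one_le_intCast_sq hn
    have hd := sq_le_one_div_sixteen hδ
    have hm : δ - n ≠ 0 := fun h => by
      rw [show δ = n by linarith] at hd; linarith
    have hp : -(δ + n) ≠ 0 := fun h => by
      rw [show δ = -n by linarith] at hd; nlinarith
    have hp' : δ + n ≠ 0 := fun h => hp (by rw [h, neg_zero])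
    have e : ∀ t : ℝ, Complex.exp (-(Complex.I * n * t)) * (Real.cos (δ * t) : ℂ) =
        (1 / 2) * Complex.exp (Complex.I * ((δ - n : ℝ) : ℂ) * t) +
        (1 / 2) * Complex.exp (Complex.I * ((-(δ + n) : ℝ) : ℂ) * t) := by
      intro t
      push_cast
      rw [Complex.cos, show Complex.I * ((δ : ℂ) - n) * t = -(Complex.I * n * t) + δ * t * Complex.I
        by ring, show Complex.I * (-((δ : ℂ) + n)) * t = -(Complex.I * n * t) + -(δ * t) * Complex.I
        by ring, Complex.exp_add, Complex.exp_add]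
      ring
    simp_rw [e]
    rw [intervalIntegral.integral_add (Continuous.intervalIntegrable (by fun_prop) _ _)
      (Continuous.intervalIntegrable (by fun_prop) _ _), intervalIntegral.integral_const_mul,
      intervalIntegral.integral_const_mul, integral_exp_I_mul hm, integral_exp_I_mul hp]
    have s1 : Real.sin ((δ - n) * π) = (-1) ^ n * Real.sin (π * δ) := by
      rw [sub_mul, Real.sin_sub_int_mul_pi, mul_comm δ]
    have s2 : Real.sin (-(δ + n) * π) = -((-1) ^ n * Real.sin (π * δ)) := by
      rw [neg_mul, Real.sin_neg, add_mul, Real.sin_add_int_mul_pi, mul_comm δ]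
    rw [s1, s2]
    have key : 2 * π * ((-1) ^ n * (-(δ * Real.sin (π * δ) / (π * ((n : ℝ) ^ 2 - δ ^ 2))))) =
        1 / 2 * (2 * ((-1) ^ n * Real.sin (π * δ)) / (δ - n)) +
        1 / 2 * (2 * -((-1) ^ n * Real.sin (π * δ)) / -(δ + n)) := by
      rw [show (n : ℝ) ^ 2 - δ ^ 2 = -((δ - n) * (δ + n)) by ring]
      generalize ((-1 : ℝ) ^ n) = ε
      have := Real.pi_ne_zero
      field_simp
      ring
    have key' := congrArg (fun r : ℝ => (r : ℂ)) key
    push_cast at key' ⊢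
    exact key'

lemma integral_exp_mul_sin {δ : ℝ} (hδ : |δ| ≤ 1 / 4) (n : ℤ) :
    (2 * π : ℂ) * (Complex.I * (-1) ^ n * (sinCoeff δ n : ℂ)) =
      ∫ t in (-π)..π, Complex.exp (-(Complex.I * n * t)) *
        (Complex.exp (Complex.I * t / 2) * (Real.sin (δ * t) : ℂ)) := by
  unfold sinCoeff
  have hn1 := quarter_le_intCast_sub_half_sq n
  have hd := sq_le_one_div_sixteen hδ
  set m : ℝ := (n : ℝ) - 1 / 2 with hmdef
  have hm : δ - m ≠ 0 := fun h => by
    rw [show δ = m by linarith] at hd; linarith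
  have hp' : δ + m ≠ 0 := fun h => by
    rw [show δ = -m by linarith] at hd; nlinarith
  have hp : -(δ + m) ≠ 0 := neg_ne_zero.mpr hp'
  have e : ∀ t : ℝ, Complex.exp (-(Complex.I * n * t)) *
        (Complex.exp (Complex.I * t / 2) * (Real.sin (δ * t) : ℂ)) =
      (Complex.I / 2) * Complex.exp (Complex.I * ((-(δ + m) : ℝ) : ℂ) * t) -
      (Complex.I / 2) * Complex.exp (Complex.I * ((δ - m : ℝ) : ℂ) * t) := by
    intro t
    rw [hmdef]
    push_cast
    rw [Complex.sin, show Complex.I * ((δ : ℂ) - (n - 1 / 2)) * t =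
        -(Complex.I * n * t) + (Complex.I * t / 2 + δ * t * Complex.I)
      by ring, show Complex.I * (-((δ : ℂ) + (n - 1 / 2))) * t =
        -(Complex.I * n * t) + (Complex.I * t / 2 + -(δ * t) * Complex.I)
      by ring]
    simp only [Complex.exp_add]
    ring
  simp_rw [e]
  rw [intervalIntegral.integral_sub (Continuous.intervalIntegrable (by fun_prop) _ _)
    (Continuous.intervalIntegrable (by fun_prop) _ _), intervalIntegral.integral_const_mul,
    intervalIntegral.integral_const_mul, integral_exp_I_mul hm, integral_exp_I_mul hp]
  have s1 : Real.sin ((δ - m) * π) = (-1) ^ n * Real.cos (π * δ) := by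
    rw [hmdef, show (δ - ((n : ℝ) - 1 / 2)) * π = (π * δ - n * π) + π / 2 by ring,
      Real.sin_add_pi_div_two, Real.cos_sub_int_mul_pi]
  have s2 : Real.sin (-(δ + m) * π) = (-1) ^ n * Real.cos (π * δ) := by
    rw [hmdef, show -(δ + ((n : ℝ) - 1 / 2)) * π = π / 2 - (π * δ + n * π) by ring,
      Real.sin_pi_div_two_sub, Real.cos_add_int_mul_pi]
  rw [s1, s2]
  have key : 2 * π * ((-1) ^ n * (δ * Real.cos (π * δ) / (π * (m ^ 2 - δ ^ 2)))) =
      1 / 2 * (2 * ((-1) ^ n * Real.cos (π * δ)) / -(δ + m)) -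
      1 / 2 * (2 * ((-1) ^ n * Real.cos (π * δ)) / (δ - m)) := by
    rw [show m ^ 2 - δ ^ 2 = -((δ - m) * (δ + m)) by ring]
    generalize ((-1 : ℝ) ^ n) = ε
    have := Real.pi_ne_zero
    field_simp
    ring
  have key' := congrArg (fun r : ℝ => Complex.I * (r : ℂ)) key
  push_cast at key' ⊢
  linear_combination key'

lemma sin_pi_mul_nonneg {δ : ℝ} (h0 : 0 ≤ δ) (h : δ ≤ 1 / 4) : 0 ≤ Real.sin (π * δ) :=
  Real.sin_nonneg_of_nonneg_of_le_pi (by positivity) (by nlinarith [Real.pi_pos])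

lemma cos_pi_mul_nonneg {δ : ℝ} (h : |δ| ≤ 1 / 4) : 0 ≤ Real.cos (π * δ) := by
  obtain ⟨h1, h2⟩ := abs_le.mp h
  exact Real.cos_nonneg_of_neg_pi_div_two_le_of_le (by nlinarith [Real.pi_pos])
    (by nlinarith [Real.pi_pos])

lemma mul_sin_le_mul_sin {δ α : ℝ} (hα : α ≤ 1 / 4) (hδ : |δ| ≤ α) :
    |δ * Real.sin (π * δ)| ≤ α * Real.sin (π * α) := by
  have h0 := abs_nonneg δ
  have e : |δ * Real.sin (π * δ)| = |δ| * Real.sin (π * |δ|) := by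
    rw [abs_mul]
    congr 1
    rcases abs_cases δ with ⟨h, h'⟩ | ⟨h, h'⟩
    · rw [h, abs_of_nonneg (sin_pi_mul_nonneg h' (by linarith))]
    · rw [h, mul_neg, Real.sin_neg, abs_of_nonpos]
      have := sin_pi_mul_nonneg (δ := -δ) (by linarith) (by linarith)
      rw [mul_neg, Real.sin_neg] at this
      linarith
  rw [e]
  refine mul_le_mul hδ ?_ (sin_pi_mul_nonneg h0 (by linarith)) (by linarith)
  exact Real.sin_le_sin_of_le_of_le_pi_div_two (by nlinarith [Real.pi_pos])
    (by nlinarith [Real.pi_pos]) (by nlinarith [Real.pi_pos])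

lemma monotoneOn_mul_cos : MonotoneOn (fun δ : ℝ => δ * Real.cos (π * δ)) (Set.Icc 0 (1 / 4)) := by
  have hd : ∀ y : ℝ, HasDerivAt (fun δ : ℝ => δ * Real.cos (π * δ))
      (1 * Real.cos (π * y) + y * (-Real.sin (π * y) * (π * 1))) y := fun y =>
    (hasDerivAt_id y).mul (((hasDerivAt_id y).const_mul π).cos)
  refine monotoneOn_of_deriv_nonneg (convex_Icc _ _) (by fun_prop) (by fun_prop) ?_
  intro y hy
  rw [interior_Icc] at hy
  rw [(hd y).deriv]
  have hpi := Real.pi_pos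
  have h1 : Real.sin (π * y) ≤ Real.sin (π / 4) :=
    Real.sin_le_sin_of_le_of_le_pi_div_two (by nlinarith [hy.1]) (by linarith)
      (by nlinarith [hy.2])
  have h2 : Real.cos (π / 4) ≤ Real.cos (π * y) :=
    Real.cos_le_cos_of_nonneg_of_le_pi (by nlinarith [hy.1]) (by linarith) (by nlinarith [hy.2])
  have h3 : Real.sin (π * y) ≤ Real.cos (π * y) := by
    rw [Real.sin_pi_div_four] at h1
    rw [Real.cos_pi_div_four] at h2
    exact h1.trans h2
  have h4 := sin_pi_mul_nonneg hy.1.le hy.2.le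
  have h5 : y * π ≤ 1 := by nlinarith [hy.2, Real.pi_le_four]
  nlinarith

lemma mul_cos_le_mul_cos {δ α : ℝ} (hα : α ≤ 1 / 4) (hδ : |δ| ≤ α) :
    |δ * Real.cos (π * δ)| ≤ α * Real.cos (π * α) := by
  have h0 := abs_nonneg δ
  have e : |δ * Real.cos (π * δ)| = |δ| * Real.cos (π * |δ|) := by
    rw [abs_mul, abs_of_nonneg (cos_pi_mul_nonneg (hδ.trans hα))]
    congr 1
    rcases abs_cases δ with ⟨h, -⟩ | ⟨h, -⟩
    · rw [h]
    · rw [h, mul_neg, Real.cos_neg]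
  rw [e]
  exact monotoneOn_mul_cos ⟨h0, hδ.trans hα⟩ ⟨h0.trans hδ, hα⟩ hδ

lemma abs_sinCoeff_le {δ α : ℝ} (hα : α ≤ 1 / 4) (hδ : |δ| ≤ α) (n : ℤ) :
    |sinCoeff δ n| ≤ sinCoeff α n := by
  have h0 := abs_nonneg δ
  have hm := quarter_le_intCast_sub_half_sq n
  have hα' : α ^ 2 ≤ 1 / 16 := sq_le_one_div_sixteen (by rwa [abs_of_nonneg (h0.trans hδ)])
  have hδα : δ ^ 2 ≤ α ^ 2 := sq_le_sq.mpr (by rwa [abs_of_nonneg (h0.trans hδ)])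
  have hpi := Real.pi_pos
  unfold sinCoeff
  have hpos : 0 < π * (((n : ℝ) - 1 / 2) ^ 2 - α ^ 2) := mul_pos hpi (by linarith)
  have hle : π * (((n : ℝ) - 1 / 2) ^ 2 - α ^ 2) ≤ π * (((n : ℝ) - 1 / 2) ^ 2 - δ ^ 2) :=
    mul_le_mul_of_nonneg_left (by linarith) hpi.le
  rw [abs_div, abs_of_pos (hpos.trans_le hle)]
  exact div_le_div₀ ((abs_nonneg _).trans (mul_cos_le_mul_cos hα hδ))
    (mul_cos_le_mul_cos hα hδ) hpos hle

/-- The moduli of the Fourier coefficients of `t ↦ 1 - cos (α t)` on `[-π, π]`. -/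
noncomputable def cosMajorant (α : ℝ) (n : ℤ) : ℝ :=
  (if n = 0 then 1 else 0) - cosCoeff α n * (-1) ^ n

lemma abs_one_sub_cosCoeff_le {δ α : ℝ} (hα : α ≤ 1 / 4) (hδ : |δ| ≤ α) (n : ℤ) :
    |(if n = 0 then 1 else 0) - cosCoeff δ n| ≤ cosMajorant α n := by
  have h0 := abs_nonneg δ
  have hpi := Real.pi_pos
  unfold cosMajorant cosCoeff
  split_ifs with hn
  · subst hn
    rw [zpow_zero, mul_one]
    have hcosInt : ∀ β : ℝ, IntervalIntegrable (fun t => Real.cos (β * t))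
        MeasureTheory.volume (-π) π := fun β => Continuous.intervalIntegrable (by fun_prop) _ _
    have h1 : ∫ t in (-π)..π, Real.cos (α * t) ≤ ∫ t in (-π)..π, Real.cos (δ * t) := by
      refine intervalIntegral.integral_mono_on (by linarith) (hcosInt α) (hcosInt δ) fun t ht => ?_
      rw [← Real.cos_abs (α * t), ← Real.cos_abs (δ * t), abs_mul, abs_mul,
        abs_of_nonneg (h0.trans hδ)]
      have ht' : |t| ≤ π := abs_le.mpr ht
      exact Real.cos_le_cos_of_nonneg_of_le_pi (by positivity)
        (by nlinarith [abs_nonneg t]) (mul_le_mul_of_nonneg_right hδ (abs_nonneg t))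
    have h2 : ∫ t in (-π)..π, Real.cos (δ * t) ≤ 2 * π := by
      have := intervalIntegral.integral_mono_on (by linarith) (hcosInt δ)
        (intervalIntegrable_const (c := (1 : ℝ))) fun t _ => Real.cos_le_one (δ * t)
      simp only [intervalIntegral.integral_const, smul_eq_mul] at this
      linarith
    have h3 : (2 * π)⁻¹ * ∫ t in (-π)..π, Real.cos (δ * t) ≤ 1 := by
      rw [inv_mul_le_iff₀ (by linarith)]; linarith
    have h4 := mul_le_mul_of_nonneg_left h1 (show 0 ≤ (2 * π)⁻¹ by positivity)
    rw [abs_of_nonneg (by linarith)]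
    linarith
  · have hn1 := one_le_intCast_sq hn
    have hα' : α ^ 2 ≤ 1 / 16 := sq_le_one_div_sixteen (by rwa [abs_of_nonneg (h0.trans hδ)])
    have hδα : δ ^ 2 ≤ α ^ 2 := sq_le_sq.mpr (by rwa [abs_of_nonneg (h0.trans hδ)])
    have hpos : 0 < π * ((n : ℝ) ^ 2 - α ^ 2) := mul_pos hpi (by linarith)
    have hle : π * ((n : ℝ) ^ 2 - α ^ 2) ≤ π * ((n : ℝ) ^ 2 - δ ^ 2) :=
      mul_le_mul_of_nonneg_left (by linarith) hpi.le
    have hε : ((-1 : ℝ) ^ n) * (-1) ^ n = 1 := by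
      rw [← mul_zpow]; simp
    have hε' : |(-1 : ℝ) ^ n| = 1 := by
      rw [abs_zpow]; simp
    rw [zero_sub, abs_neg, abs_mul, hε', one_mul, abs_neg, abs_div, abs_of_pos (hpos.trans_le hle)]
    calc _ ≤ α * Real.sin (π * α) / (π * ((n : ℝ) ^ 2 - α ^ 2)) :=
          div_le_div₀ ((abs_nonneg _).trans (mul_sin_le_mul_sin hα hδ))
            (mul_sin_le_mul_sin hα hδ) hpos hle
      _ = _ := by linear_combination (-(α * Real.sin (π * α) / (π * ((n : ℝ) ^ 2 - α ^ 2)))) * hε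

lemma summable_of_abs_mul_sq_le {a : ℤ → ℝ} {C : ℝ}
    (h : ∀ n : ℤ, n ≠ 0 → |a n| ≤ C * (1 / (n : ℝ) ^ 2)) :
    Summable a := by
  refine Summable.of_norm_bounded_eventually
    ((Real.summable_one_div_int_pow.mpr one_lt_two).mul_left C) ?_
  refine (Set.finite_singleton (0 : ℤ)).subset fun n hn => ?_
  by_contra hne
  exact hn (h n hne)

lemma summable_cosCoeff {δ : ℝ} (hδ : |δ| ≤ 1 / 4) : Summable (cosCoeff δ) := by
  have hd := sq_le_one_div_sixteen hδ
  have hpi := Real.pi_gt_three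
  refine summable_of_abs_mul_sq_le (C := 1) fun n hn => ?_
  have hn1 := one_le_intCast_sq hn
  rw [cosCoeff, if_neg hn, abs_mul, abs_zpow, abs_neg, abs_neg, abs_one, one_zpow, one_mul, one_mul,
    abs_div, abs_mul]
  have h1 : |δ| * |Real.sin (π * δ)| ≤ 1 := by
    nlinarith [abs_nonneg δ, abs_nonneg (Real.sin (π * δ)), Real.abs_sin_le_one (π * δ)]
  have h2 : (n : ℝ) ^ 2 ≤ π * ((n : ℝ) ^ 2 - δ ^ 2) := by nlinarith
  rw [abs_of_pos (show 0 < π * ((n : ℝ) ^ 2 - δ ^ 2) by linarith)]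
  exact div_le_div₀ zero_le_one h1 (by linarith) h2

lemma summable_sinCoeff {δ : ℝ} (hδ : |δ| ≤ 1 / 4) : Summable (sinCoeff δ) := by
  have hd := sq_le_one_div_sixteen hδ
  have hpi := Real.pi_gt_three
  refine summable_of_abs_mul_sq_le (C := 4) fun n hn => ?_
  have hn1 := one_le_intCast_sq hn
  have hm := quarter_le_intCast_sub_half_sq n
  have hm2 : (n : ℝ) ^ 2 / 8 ≤ ((n : ℝ) - 1 / 2) ^ 2 - δ ^ 2 := by
    nlinarith [sq_nonneg ((n : ℝ) - 1)]
  rw [sinCoeff, abs_div, abs_mul]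
  have h1 : |δ| * |Real.cos (π * δ)| ≤ 1 := by
    nlinarith [abs_nonneg δ, abs_nonneg (Real.cos (π * δ)), Real.abs_cos_le_one (π * δ)]
  have h2 : (n : ℝ) ^ 2 / 4 ≤ π * (((n : ℝ) - 1 / 2) ^ 2 - δ ^ 2) := by nlinarith
  rw [abs_of_pos (show 0 < π * (((n : ℝ) - 1 / 2) ^ 2 - δ ^ 2) by linarith)]
  calc _ ≤ 1 / ((n : ℝ) ^ 2 / 4) := div_le_div₀ zero_le_one h1 (by linarith) h2
    _ = _ := by field_simp

lemma exp_I_mul_int_mul_pi (n : ℤ) : Complex.exp (Complex.I * n * π) = (-1) ^ n := by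
  rw [show Complex.I * n * π = n * (π * Complex.I) by ring, Complex.exp_int_mul,
    Complex.exp_pi_mul_I]

lemma hasSum_cosCoeff {δ t : ℝ} (hδ : |δ| ≤ 1 / 4) (ht : t ∈ Set.Icc (-π) π) :
    HasSum (fun n : ℤ => (cosCoeff δ n : ℂ) * Complex.exp (Complex.I * n * t))
      (Real.cos (δ * t) : ℂ) :=
  hasSum_fourier_of_summable (g := fun t => (Real.cos (δ * t) : ℂ)) (by fun_prop)
    (by simp) (integral_exp_mul_cos hδ) (by exact_mod_cast summable_cosCoeff hδ) ht

/-- The expansion of `1 - cos (δ t)` in Kadec's basis. -/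
lemma hasSum_one_sub_cos {δ t : ℝ} (hδ : |δ| ≤ 1 / 4) (ht : t ∈ Set.Icc (-π) π) :
    HasSum (fun n : ℤ => (((if n = 0 then 1 else 0) - cosCoeff δ n : ℝ) : ℂ) *
      Complex.exp (Complex.I * n * t)) (1 - (Real.cos (δ * t) : ℂ)) := by
  refine ((hasSum_ite_eq (0 : ℤ) (1 : ℂ)).sub (hasSum_cosCoeff hδ ht)).congr_fun fun n => ?_
  by_cases hn : n = 0
  · simp [hn]
  · simp [hn]

lemma hasSum_cosMajorant {α : ℝ} (hα0 : 0 ≤ α) (hα : α ≤ 1 / 4) :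
    HasSum (cosMajorant α) (1 - Real.cos (π * α)) := by
  have h := hasSum_one_sub_cos (δ := α) (t := π) (by rwa [abs_of_nonneg hα0])
    ⟨by linarith [Real.pi_pos], le_rfl⟩
  rw [← Complex.hasSum_ofReal]
  push_cast at h ⊢
  rw [mul_comm (α : ℂ)] at h
  convert h using 2 with n
  rw [exp_I_mul_int_mul_pi, cosMajorant]
  by_cases hn : n = 0
  · simp [hn]
  · simp [hn]

/-- The expansion of `sin (δ t)` in Kadec's basis. -/
lemma hasSum_sin {δ t : ℝ} (hδ : |δ| ≤ 1 / 4) (ht : t ∈ Set.Icc (-π) π) :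
    HasSum (fun n : ℤ => (sinCoeff δ n : ℂ) *
      (Complex.I * (-1) ^ n * Complex.exp (Complex.I * (n - 1 / 2) * t)))
      (Real.sin (δ * t) : ℂ) := by
  have hs : Summable fun n : ℤ => Complex.I * (-1) ^ n * (sinCoeff δ n : ℂ) := by
    refine Summable.of_norm ?_
    simpa using (summable_sinCoeff hδ).abs
  have hgp : Complex.exp (Complex.I * (-π : ℝ) / 2) * (Real.sin (δ * -π) : ℂ) =
      Complex.exp (Complex.I * π / 2) * (Real.sin (δ * π) : ℂ) := by
    have h1 : Complex.I * (-π : ℝ) / 2 = -(π / 2 * Complex.I) := by push_cast; ring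
    have h2 : Complex.I * π / 2 = π / 2 * Complex.I := by ring
    rw [h1, h2, Complex.exp_neg, Complex.exp_pi_div_two_mul_I]
    simp
  have h := (hasSum_fourier_of_summable
    (g := fun t => Complex.exp (Complex.I * t / 2) * (Real.sin (δ * t) : ℂ)) (by fun_prop)
    hgp (integral_exp_mul_sin hδ) hs ht).mul_left (Complex.exp (-(Complex.I * t / 2)))
  have e : Complex.exp (-(Complex.I * t / 2)) *
      (Complex.exp (Complex.I * t / 2) * (Real.sin (δ * t) : ℂ)) = (Real.sin (δ * t) : ℂ) := by
    rw [← mul_assoc, ← Complex.exp_add]; simp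
  rw [e] at h
  refine h.congr_fun fun n => ?_
  rw [show Complex.I * ((n : ℂ) - 1 / 2) * t = -(Complex.I * t / 2) + Complex.I * n * t by ring,
    Complex.exp_add]
  ring

lemma hasSum_sinCoeff {α : ℝ} (hα0 : 0 ≤ α) (hα : α ≤ 1 / 4) :
    HasSum (sinCoeff α) (Real.sin (π * α)) := by
  have h := hasSum_sin (δ := α) (t := π) (by rwa [abs_of_nonneg hα0])
    ⟨by linarith [Real.pi_pos], le_rfl⟩
  rw [← Complex.hasSum_ofReal, mul_comm π]
  convert h using 2 with n
  have h1 : Complex.I * ((n : ℂ) - 1 / 2) * π = Complex.I * n * π + -(π / 2 * Complex.I) := by ring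
  have hε : ((-1 : ℂ) ^ n) * (-1) ^ n = 1 := by
    rw [← mul_zpow]; simp
  rw [h1, Complex.exp_add, exp_I_mul_int_mul_pi, Complex.exp_neg, Complex.exp_pi_div_two_mul_I,
    Complex.inv_I]
  linear_combination (-(sinCoeff α n : ℂ)) * hε +
    (sinCoeff α n : ℂ) * ((-1) ^ n * (-1) ^ n) * Complex.I_mul_I

lemma sum_zpow_Icc_eq_zero {z : ℂ} (N : ℕ) (hz : z ≠ 1) (hzN : z ^ (2 * N + 1) = 1) :
    ∑ k ∈ Finset.Icc (-(N : ℤ)) (N : ℤ), z ^ k = 0 := by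
  have hz0 : z ≠ 0 := by
    rintro rfl
    simp at hzN
  have h : ∑ k ∈ Finset.Icc (-(N : ℤ)) (N : ℤ), z ^ k =
      ∑ i ∈ Finset.range (2 * N + 1), z ^ (-(N : ℤ)) * z ^ i := by
    refine Finset.sum_nbij' (fun k => (k + N).toNat) (fun i => (i : ℤ) - N) ?_ ?_ ?_ ?_ ?_
    · intro k hk
      simp only [Finset.mem_Icc, Finset.mem_range] at *
      omega
    · intro k hk
      simp only [Finset.mem_Icc, Finset.mem_range] at *
      omega
    · intro k hk
      simp only [Finset.mem_Icc] at *
      omega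
    · intro k hk
      simp
    · intro k hk
      simp only [Finset.mem_Icc] at *
      rw [← zpow_natCast, ← zpow_add₀ hz0]
      congr 1
      omega
  rw [h, ← Finset.mul_sum, geom_sum_eq hz, hzN]
  simp

/-- The frequencies (or node labels) `-N, …, N`. -/
abbrev Freq (N : ℕ) : Type := Finset.Icc (-(N : ℤ)) (N : ℤ)

/-- The kernel of the discrete Fourier transform of length `2N+1`. -/
noncomputable def dftKernel (N : ℕ) (k j : ℤ) : ℂ :=
  Complex.exp (Complex.I * (k * (j * (2 * π / (2 * N + 1)))))

lemma norm_dftKernel (N : ℕ) (k j : ℤ) : ‖dftKernel N k j‖ = 1 := by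
  rw [dftKernel, mul_comm]
  exact_mod_cast Complex.norm_exp_ofReal_mul_I (k * (j * (2 * π / (2 * N + 1))))

lemma sum_dftKernel_mul_conj (N : ℕ) (j l : Freq N) :
    ∑ k : Freq N, dftKernel N k j * (starRingEnd ℂ) (dftKernel N k l) =
      if j = l then (2 * N + 1 : ℂ) else 0 := by
  have hN : (2 * N + 1 : ℂ) ≠ 0 := by exact_mod_cast (by omega : 2 * N + 1 ≠ 0)
  have hπ : (π : ℂ) ≠ 0 := by exact_mod_cast Real.pi_ne_zero
  split_ifs with h
  · subst h
    simp_rw [Complex.mul_conj, Complex.normSq_eq_norm_sq, norm_dftKernel]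
    simp
    norm_cast
    omega
  · set z : ℂ := Complex.exp (Complex.I * (((j - l : ℤ) : ℂ) * (2 * π / (2 * N + 1)))) with hz
    have hk : ∀ k : Freq N, dftKernel N k j * (starRingEnd ℂ) (dftKernel N k l) =
        z ^ (k : ℤ) := by
      intro k
      rw [dftKernel, dftKernel, ← Complex.exp_conj, ← Complex.exp_add, hz, ← Complex.exp_int_mul]
      congr 1
      simp only [map_mul, Complex.conj_I, map_div₀, map_add, map_one, map_ofNat, map_intCast,
        map_natCast, Complex.conj_ofReal]
      push_cast
      ring
    simp_rw [hk]
    rw [Finset.sum_coe_sort (Finset.Icc (-(N : ℤ)) (N : ℤ)) (fun k => z ^ k)]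
    refine sum_zpow_Icc_eq_zero N ?_ ?_
    · intro h1
      obtain ⟨m, hm⟩ := Complex.exp_eq_one_iff.mp h1
      have h2 : ((j - l : ℤ) : ℂ) = m * (2 * N + 1) := by
        have := Complex.I_ne_zero
        field_simp at hm
        linear_combination hm
      have h3 : (j - l : ℤ) = m * (2 * N + 1) := by exact_mod_cast h2
      have hj := Finset.mem_Icc.mp j.2
      have hl := Finset.mem_Icc.mp l.2
      have hm0 : m = 0 := by
        have h4 : m < 1 := by by_contra hc; nlinarith
        have h5 : -1 < m := by by_contra hc; nlinarith
        omega
      rw [hm0, zero_mul] at h3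
      exact h (Subtype.ext (by omega))
    · rw [hz, ← Complex.exp_nat_mul, Complex.exp_eq_one_iff]
      refine ⟨j - l, ?_⟩
      push_cast
      field_simp

/-- The unnormalized discrete Fourier transform, with values in Euclidean space. -/
noncomputable def dft (N : ℕ) (u : Freq N → ℂ) : EuclideanSpace ℂ (Freq N) :=
  WithLp.toLp 2 fun k => ∑ j : Freq N, u j * dftKernel N k j

/-- Parseval's identity for the discrete Fourier transform. -/
lemma norm_dft (N : ℕ) (u : Freq N → ℂ) :
    ‖dft N u‖ = √(2 * N + 1) * ‖(WithLp.toLp 2 u : EuclideanSpace ℂ (Freq N))‖ := by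
  rw [EuclideanSpace.norm_eq, EuclideanSpace.norm_eq, ← Real.sqrt_mul (by positivity)]
  congr 1
  rw [← Complex.ofReal_inj]
  push_cast
  simp_rw [← Complex.mul_conj']
  calc ∑ k, dft N u k * (starRingEnd ℂ) (dft N u k)
      = ∑ k : Freq N, ∑ j : Freq N, ∑ l : Freq N, u j * (starRingEnd ℂ) (u l) *
          (dftKernel N k j * (starRingEnd ℂ) (dftKernel N k l)) := by
        refine Finset.sum_congr rfl fun k _ => ?_
        simp only [dft, map_sum, map_mul, Finset.sum_mul_sum]
        refine Finset.sum_congr rfl fun j _ => Finset.sum_congr rfl fun l _ => ?_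
        ring
    _ = ∑ j : Freq N, ∑ l : Freq N, u j * (starRingEnd ℂ) (u l) *
          ∑ k : Freq N, dftKernel N k j * (starRingEnd ℂ) (dftKernel N k l) := by
        rw [Finset.sum_comm]
        refine Finset.sum_congr rfl fun j _ => ?_
        rw [Finset.sum_comm]
        simp only [Finset.mul_sum]
    _ = (2 * N + 1) * ∑ j : Freq N, u j * (starRingEnd ℂ) (u j) := by
        simp_rw [sum_dftKernel_mul_conj]
        simp only [mul_ite, mul_zero, Finset.sum_ite_eq, Finset.mem_univ, if_true]
        rw [Finset.mul_sum]
        exact Finset.sum_congr rfl fun j _ => mul_comm _ _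

/-- A Schur multiplier that is a sum of products of functions of one variable is bounded
on the discrete Fourier transform by the sum of the bounds on its summands. -/
lemma norm_sum_mul_dftKernel_le {N : ℕ} {g : Freq N → Freq N → ℂ} {a : ℤ → Freq N → ℂ}
    {φ : ℤ → Freq N → ℂ} {A : ℤ → ℝ} {S : ℝ}
    (hg : ∀ j k, HasSum (fun n => a n j * φ n k) (g j k))
    (hφ : ∀ n k, ‖φ n k‖ ≤ 1) (ha : ∀ n j, ‖a n j‖ ≤ A n) (hA : HasSum A S) (w : Freq N → ℂ) :
    ‖(WithLp.toLp 2 fun k => ∑ j, w j * g j k * dftKernel N k j : EuclideanSpace ℂ (Freq N))‖ ≤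
      S * (√(2 * N + 1) * ‖(WithLp.toLp 2 w : EuclideanSpace ℂ (Freq N))‖) := by
  have hsum : HasSum (fun n => (WithLp.toLp 2 fun k => φ n k * dft N (fun j => a n j * w j) k :
      EuclideanSpace ℂ (Freq N)))
      (WithLp.toLp 2 fun k => ∑ j, w j * g j k * dftKernel N k j) := by
    have hpi : HasSum (fun n => fun k => φ n k * dft N (fun j => a n j * w j) k)
        (fun k => ∑ j, w j * g j k * dftKernel N k j) := by
      refine Pi.hasSum.mpr fun k => ?_
      have h := hasSum_sum (s := Finset.univ)
        fun j _ => (hg j k).mul_left (w j * dftKernel N k j)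
      rw [show ∑ j, w j * g j k * dftKernel N k j = ∑ j, w j * dftKernel N k j * g j k from
        Finset.sum_congr rfl fun j _ => by ring]
      refine h.congr_fun fun n => ?_
      simp only [dft, Finset.mul_sum]
      exact Finset.sum_congr rfl fun j _ => by ring
    exact ((PiLp.continuousLinearEquiv 2 ℂ (fun _ : Freq N => ℂ)).symm :
      (Freq N → ℂ) →L[ℂ] EuclideanSpace ℂ (Freq N)).hasSum hpi
  refine hsum.norm_le_of_bounded (hA.mul_right _) fun n => ?_
  have hA1 : 0 ≤ A n := (norm_nonneg _).trans (ha n ⟨0, by simp⟩)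
  have h1 : ‖(WithLp.toLp 2 fun k => φ n k * dft N (fun j => a n j * w j) k :
      EuclideanSpace ℂ (Freq N))‖ ≤ ‖dft N (fun j => a n j * w j)‖ := by
    rw [EuclideanSpace.norm_eq, EuclideanSpace.norm_eq]
    refine Real.sqrt_le_sqrt (Finset.sum_le_sum fun k _ => ?_)
    simp only [norm_mul]
    gcongr
    exact mul_le_of_le_one_left (norm_nonneg _) (hφ n k)
  have h2 : ‖(WithLp.toLp 2 fun j => a n j * w j : EuclideanSpace ℂ (Freq N))‖ ≤
      A n * ‖(WithLp.toLp 2 w : EuclideanSpace ℂ (Freq N))‖ := by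
    rw [EuclideanSpace.norm_eq, EuclideanSpace.norm_eq, ← Real.sqrt_sq hA1,
      ← Real.sqrt_mul (sq_nonneg _), Finset.mul_sum]
    refine Real.sqrt_le_sqrt (Finset.sum_le_sum fun j _ => ?_)
    simp only [norm_mul, mul_pow]
    gcongr
    exact ha n j
  rw [norm_dft] at h1
  calc _ ≤ _ := h1
    _ ≤ √(2 * N + 1) * (A n * ‖(WithLp.toLp 2 w : EuclideanSpace ℂ (Freq N))‖) := by gcongr
    _ = _ := by ring

lemma sum_weight_mul_exp {N : ℕ} {x w : ℤ → ℝ} (hw : ExactQuad N x w) (k : Freq N) :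
    ∑ j : Freq N, (w j : ℂ) * Complex.exp (Complex.I * (k : ℤ) * x j) =
      if (k : ℤ) = 0 then (2 * π : ℂ) else 0 := by
  have h := hw (fun t => Complex.exp (Complex.I * (k : ℤ) * t)) ⟨Pi.single (k : ℤ) 1, fun t => by
    rw [Finset.sum_eq_single_of_mem (k : ℤ) k.2]
    · simp
    · intro b _ hb
      simp [hb]⟩
  rw [Finset.sum_coe_sort (Finset.Icc (-(N : ℤ)) (N : ℤ))
    (fun j => (w j : ℂ) * Complex.exp (Complex.I * (k : ℤ) * x j)), h]
  split_ifs with hk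
  · simp [hk]
    ring
  · have := integral_exp_I_mul (s := ((k : ℤ) : ℝ)) (by exact_mod_cast hk)
    rw [Real.sin_int_mul_pi] at this
    simpa using this

/-- A discrete Kadec-type bound for the weights of an exact quadrature rule. -/
theorem sum_abs_weight_mul_le {N : ℕ} {α : ℝ} (hα0 : 0 ≤ α) (hα : α ≤ 1 / 4) {x w : ℤ → ℝ}
    (hx : PerturbedNodes N α x) (hw : ExactQuad N x w) :
    (∑ j ∈ Finset.Icc (-(N : ℤ)) (N : ℤ), |w j|) * (Real.cos (π * α) - Real.sin (π * α)) ≤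
      2 * π := by
  have hpi := Real.pi_pos
  have hN : (0 : ℝ) < 2 * N + 1 := by positivity
  set h : ℝ := 2 * π / (2 * N + 1) with hh
  have hpos : 0 < h := by positivity
  set δ : Freq N → ℝ := fun j => x j / h - j with hδdef
  have hδ : ∀ j, |δ j| ≤ α := by
    intro j
    have h1 := hx j j.2
    rw [← hh] at h1
    have h2 : x j - (j : ℤ) * h = δ j * h := by
      simp only [hδdef]
      field_simp
    rw [h2, abs_mul, abs_of_pos hpos] at h1
    exact le_of_mul_le_mul_right h1 hpos
  have hxj : ∀ j : Freq N, x j = ((j : ℤ) + δ j) * h := by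
    intro j
    simp only [hδdef]
    field_simp
    ring
  have ht : ∀ k : Freq N, ((k : ℤ) : ℝ) * h ∈ Set.Icc (-π) π := by
    intro k
    have hk := Finset.mem_Icc.mp k.2
    have h1 : (-(N : ℝ)) ≤ (k : ℤ) := by exact_mod_cast hk.1
    have h2 : ((k : ℤ) : ℝ) ≤ N := by exact_mod_cast hk.2
    have h3 : h * (2 * N + 1) = 2 * π := by rw [hh]; field_simp
    constructor <;> nlinarith
  set W : Freq N → ℂ := fun j => (w j : ℂ) with hW
  set P : EuclideanSpace ℂ (Freq N) := WithLp.toLp 2 fun k => ∑ j, W j *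
    (1 - (Real.cos (δ j * ((k : ℤ) * h)) : ℂ)) * dftKernel N k j with hP
  set Q : EuclideanSpace ℂ (Freq N) := WithLp.toLp 2 fun k => ∑ j, W j *
    (Real.sin (δ j * ((k : ℤ) * h)) : ℂ) * dftKernel N k j with hQ
  set b : EuclideanSpace ℂ (Freq N) :=
    EuclideanSpace.single (⟨0, by simp⟩ : Freq N) (2 * π : ℂ) with hb
  have hnb : ‖b‖ = 2 * π := by
    rw [hb, PiLp.norm_single]
    simp [abs_of_pos hpi]
  have hnP : ‖P‖ ≤ (1 - Real.cos (π * α)) *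
      (√(2 * N + 1) * ‖(WithLp.toLp 2 W : EuclideanSpace ℂ (Freq N))‖) :=
    norm_sum_mul_dftKernel_le
      (fun j k => hasSum_one_sub_cos ((hδ j).trans hα) (ht k))
      (fun n k => by
        rw [show Complex.I * n * (((k : ℤ) * h : ℝ) : ℂ) = ((n * ((k : ℤ) * h) : ℝ) : ℂ) * Complex.I
          by push_cast; ring, Complex.norm_exp_ofReal_mul_I])
      (fun n j => by
        rw [Complex.norm_real, Real.norm_eq_abs]
        exact abs_one_sub_cosCoeff_le hα (hδ j) n)
      (hasSum_cosMajorant hα0 hα) W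
  have hnQ : ‖Q‖ ≤ Real.sin (π * α) *
      (√(2 * N + 1) * ‖(WithLp.toLp 2 W : EuclideanSpace ℂ (Freq N))‖) :=
    norm_sum_mul_dftKernel_le
      (fun j k => hasSum_sin ((hδ j).trans hα) (ht k))
      (fun n k => by
        rw [show Complex.I * ((n : ℂ) - 1 / 2) * (((k : ℤ) * h : ℝ) : ℂ) =
          (((n - 1 / 2) * ((k : ℤ) * h) : ℝ) : ℂ) * Complex.I
          by push_cast; ring, norm_mul, Complex.norm_exp_ofReal_mul_I]
        simp)
      (fun n j => by
        rw [Complex.norm_real, Real.norm_eq_abs]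
        exact abs_sinCoeff_le hα (hδ j) n)
      (hasSum_sinCoeff hα0 hα) W
  have hdecomp : dft N W = b + P - Complex.I • Q := by
    ext k
    have hbk : b k = ∑ j : Freq N, (w j : ℂ) * Complex.exp (Complex.I * (k : ℤ) * x j) := by
      rw [sum_weight_mul_exp hw k, hb, PiLp.single_apply]
      simp only [Subtype.ext_iff]
    simp only [PiLp.sub_apply, PiLp.add_apply, PiLp.smul_apply, smul_eq_mul]
    rw [hbk]
    simp only [hP, hQ, dft, Finset.mul_sum]
    rw [← Finset.sum_add_distrib, ← Finset.sum_sub_distrib]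
    refine Finset.sum_congr rfl fun j _ => ?_
    have he : Complex.exp (Complex.I * (k : ℤ) * x j) = dftKernel N k j *
        ((Real.cos (δ j * ((k : ℤ) * h)) : ℂ) +
          (Real.sin (δ j * ((k : ℤ) * h)) : ℂ) * Complex.I) := by
      rw [Complex.ofReal_cos, Complex.ofReal_sin, ← Complex.exp_mul_I, dftKernel,
        ← Complex.exp_add, hxj j, hh]
      congr 1
      push_cast
      ring
    rw [he]
    simp only [hW]
    ring
  set s : ℝ := √(2 * N + 1) * ‖(WithLp.toLp 2 W : EuclideanSpace ℂ (Freq N))‖ with hs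
  have hmain : s * (Real.cos (π * α) - Real.sin (π * α)) ≤ 2 * π := by
    have h1 : s ≤ ‖b‖ + ‖P‖ + ‖Q‖ := by
      rw [hs, ← norm_dft, hdecomp]
      refine (norm_sub_le _ _).trans ?_
      rw [norm_smul, Complex.norm_I, one_mul]
      gcongr
      exact norm_add_le _ _
    linarith
  have hsum : ∑ j ∈ Finset.Icc (-(N : ℤ)) (N : ℤ), |w j| ≤ s := by
    rw [hs, EuclideanSpace.norm_eq, ← Real.sqrt_mul hN.le]
    refine Real.le_sqrt_of_sq_le ?_
    rw [← Finset.sum_coe_sort (Finset.Icc (-(N : ℤ)) (N : ℤ)) (fun j => |w j|)]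
    refine (sq_sum_le_card_mul_sum_sq).trans (le_of_eq ?_)
    congr 1
    · simp
      norm_cast
      omega
    · refine Finset.sum_congr rfl fun j _ => ?_
      simp [hW]
  have hcs : 0 ≤ Real.cos (π * α) - Real.sin (π * α) := by
    rw [sub_nonneg, ← Real.cos_pi_div_two_sub]
    exact Real.cos_le_cos_of_nonneg_of_le_pi (by positivity) (by nlinarith) (by nlinarith)
  exact (mul_le_mul_of_nonneg_right hsum hcs).trans hmain

lemma isOpen_strip (ρ : ℝ) : IsOpen {z : ℂ | |z.im| < ρ} :=
  isOpen_lt (by fun_prop) continuous_const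

lemma isPreconnected_strip (ρ : ℝ) : IsPreconnected {z : ℂ | |z.im| < ρ} := by
  have h : {z : ℂ | |z.im| < ρ} = Complex.imLm ⁻¹' Set.Ioo (-ρ) ρ := by
    ext z
    simp [abs_lt]
  rw [h]
  exact ((convex_Ioo _ _).linear_preimage _).isPreconnected

lemma continuous_of_eq_on_strip {ρ : ℝ} (hρ : 0 < ρ) {f : ℝ → ℂ} {F : ℂ → ℂ}
    (hFf : ∀ t : ℝ, F t = f t) (hFd : DifferentiableOn ℂ F {z : ℂ | |z.im| < ρ}) :
    Continuous f := by
  rw [show f = fun t : ℝ => F t from funext fun t => (hFf t).symm]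
  exact hFd.continuousOn.comp_continuous Complex.continuous_ofReal fun t => by simpa using hρ

/-- A holomorphic function on a strip that is periodic on the real line is periodic. -/
lemma periodic_of_periodic_real {ρ p : ℝ} (hρ : 0 < ρ) {F : ℂ → ℂ}
    (hFd : DifferentiableOn ℂ F {z : ℂ | |z.im| < ρ}) (hp : ∀ t : ℝ, F (t + p) = F t)
    {z : ℂ} (hz : |z.im| < ρ) : F (z + p) = F z := by
  have h1 : AnalyticOnNhd ℂ F {z : ℂ | |z.im| < ρ} := hFd.analyticOnNhd (isOpen_strip ρ)
  have h2 : AnalyticOnNhd ℂ (fun z => F (z + p)) {z : ℂ | |z.im| < ρ} := by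
    refine DifferentiableOn.analyticOnNhd (fun z hz => ?_) (isOpen_strip ρ)
    have hz' : z + p ∈ {z : ℂ | |z.im| < ρ} := by simpa using hz
    have := ((hFd _ hz').differentiableAt ((isOpen_strip ρ).mem_nhds hz')).comp z
      (differentiableAt_id.add_const (p : ℂ))
    exact this.differentiableWithinAt
  refine h2.eqOn_of_preconnected_of_frequently_eq h1 (isPreconnected_strip ρ) (z₀ := ((0 : ℝ) : ℂ))
    (by simpa using hρ) ?_ hz
  have hreal : ∃ᶠ t : ℝ in nhdsWithin 0 {0}ᶜ, F (t + p) = F t := .of_forall hp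
  refine Filter.Tendsto.frequently (f := fun t : ℝ => (t : ℂ)) ?_ hreal
  refine tendsto_nhdsWithin_iff.mpr ⟨?_, ?_⟩
  · exact (Complex.continuous_ofReal.tendsto 0).mono_left nhdsWithin_le_nhds
  · filter_upwards [self_mem_nhdsWithin] with t ht
    simpa using ht

/-- Shifting the contour of integration over a full period inside a strip. -/
lemma integral_eq_integral_add_mul_I {ρ y : ℝ} (hy : |y| < ρ) {H : ℂ → ℂ}
    (hHd : DifferentiableOn ℂ H {z : ℂ | |z.im| < ρ})
    (hH : ∀ z : ℂ, |z.im| < ρ → H (z + (2 * π : ℝ)) = H z) :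
    ∫ t in (-π)..π, H t = ∫ t in (-π)..π, H (t + y * Complex.I) := by
  have h := Complex.integral_boundary_rect_eq_zero_of_differentiableOn H ((-π : ℝ) : ℂ)
    (π + y * Complex.I) (hHd.mono fun z hz => by
      have h1 := (Complex.mem_reProdIm.mp hz).2
      simp only [Complex.ofReal_im, Complex.add_im, Complex.mul_im, Complex.ofReal_re,
        Complex.I_im, Complex.I_re, mul_one, mul_zero, add_zero, zero_add] at h1
      have := Set.abs_sub_left_of_mem_uIcc h1
      simp only [sub_zero] at this
      exact this.trans_lt hy)
  simp only [Complex.ofReal_im, Complex.add_im, Complex.mul_im, Complex.ofReal_re, Complex.add_re,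
    Complex.mul_re, Complex.I_im, Complex.I_re, mul_one, mul_zero, add_zero, zero_add, sub_self,
    Complex.ofReal_zero, zero_mul] at h
  have hside : ∫ s in (0 : ℝ)..y, H (π + s * Complex.I) =
      ∫ s in (0 : ℝ)..y, H ((-π : ℝ) + s * Complex.I) := by
    refine intervalIntegral.integral_congr fun s hs => ?_
    have h1 := Set.abs_sub_left_of_mem_uIcc hs
    simp only [sub_zero] at h1
    have h2 := hH ((-π : ℝ) + s * Complex.I) (by simpa using h1.trans_lt hy)
    rw [← h2]
    congr 1
    push_cast
    ring
  rw [hside, add_sub_cancel_right, sub_eq_zero] at h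
  exact h

/-- Exponential decay of the Fourier coefficients of a function analytic in a strip. -/
lemma norm_integral_exp_mul_le {ρ M : ℝ} (hρ : 0 < ρ) {F : ℂ → ℂ}
    (hFd : DifferentiableOn ℂ F {z : ℂ | |z.im| < ρ})
    (hFp : ∀ t : ℝ, F (t + (2 * π : ℝ)) = F t)
    (hFb : ∀ z : ℂ, |z.im| < ρ → ‖F z‖ ≤ M) (n : ℤ) :
    ‖∫ t in (-π)..π, Complex.exp (-(Complex.I * n * t)) * F t‖ ≤
      2 * π * (M * Real.exp (-ρ) ^ n.natAbs) := by
  have hpi := Real.pi_pos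
  have hshift : ∀ y : ℝ, |y| < ρ →
      ‖∫ t in (-π)..π, Complex.exp (-(Complex.I * n * t)) * F t‖ ≤
        2 * π * (M * Real.exp (n * y)) := by
    intro y hy
    have h1 := integral_eq_integral_add_mul_I hy
      (H := fun z => Complex.exp (-(Complex.I * n * z)) * F z)
      (DifferentiableOn.mul (by fun_prop) hFd) (fun z hz => by
        rw [periodic_of_periodic_real hρ hFd hFp hz]
        congr 1
        rw [Complex.exp_eq_exp_iff_exists_int]
        refine ⟨-n, ?_⟩
        push_cast
        ring)
    rw [h1]
    refine (intervalIntegral.norm_integral_le_of_norm_le_const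
      (C := M * Real.exp (n * y)) fun t _ => ?_).trans (le_of_eq ?_)
    · rw [norm_mul, Complex.norm_exp, mul_comm]
      have hb := hFb (t + y * Complex.I) (by simpa using hy)
      have hre : (-(Complex.I * n * (t + y * Complex.I))).re = n * y := by simp
      rw [hre]
      gcongr
    · rw [show π - -π = 2 * π by ring, abs_of_pos (by positivity)]
      ring
  have hlim : ∀ r ∈ Set.Ioo 0 ρ, ‖∫ t in (-π)..π, Complex.exp (-(Complex.I * n * t)) * F t‖ ≤
      2 * π * (M * Real.exp (-r) ^ n.natAbs) := by
    intro r hr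
    rw [← Real.exp_nat_mul, Nat.cast_natAbs]
    rcases le_total 0 n with hn | hn
    · rw [abs_of_nonneg hn]
      exact hshift (-r) (by rw [abs_neg, abs_of_pos hr.1]; exact hr.2)
    · rw [abs_of_nonpos hn]
      have := hshift r (by rw [abs_of_pos hr.1]; exact hr.2)
      rwa [show ((-n : ℤ) : ℝ) * -r = n * r by push_cast; ring]
  have hcont : Filter.Tendsto (fun r : ℝ => 2 * π * (M * Real.exp (-r) ^ n.natAbs))
      (nhdsWithin ρ (Set.Iio ρ)) (nhds (2 * π * (M * Real.exp (-ρ) ^ n.natAbs))) :=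
    (Continuous.tendsto (by fun_prop) ρ).mono_left nhdsWithin_le_nhds
  refine ge_of_tendsto hcont ?_
  filter_upwards [Ioo_mem_nhdsLT hρ] with r hr using hlim r hr

/-- A two-sided geometric tail. -/
lemma hasSum_geometric_tail {r : ℝ} (hr0 : 0 ≤ r) (hr1 : r < 1) (N : ℕ) :
    HasSum (fun n : ℤ => if n ∈ Finset.Icc (-(N : ℤ)) (N : ℤ) then 0 else r ^ n.natAbs)
      (2 * (r ^ (N + 1) / (1 - r))) := by
  have hgeo : ∀ m : ℕ, HasSum (fun n : ℕ => r ^ (n + m)) (r ^ m / (1 - r)) := by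
    intro m
    have := (hasSum_geometric_of_lt_one hr0 hr1).mul_left (r ^ m)
    rw [← div_eq_mul_inv] at this
    exact this.congr_fun fun n => by rw [pow_add, mul_comm]
  rw [two_mul]
  refine HasSum.of_nat_of_neg_add_one ?_ ?_
  · have h := (hasSum_nat_add_iff (f := fun n : ℕ => if (n : ℤ) ∈ Finset.Icc (-(N : ℤ)) (N : ℤ)
      then 0 else r ^ (n : ℤ).natAbs) (N + 1) (g := r ^ (N + 1) / (1 - r))).mp
      ((hgeo (N + 1)).congr_fun fun n => ?_)
    · rw [Finset.sum_eq_zero, add_zero] at h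
      · exact h
      · intro i hi
        rw [if_pos]
        simp only [Finset.mem_range, Finset.mem_Icc] at *
        omega
    · rw [if_neg]
      · rfl
      · simp only [Finset.mem_Icc]
        omega
  · have h := (hasSum_nat_add_iff (f := fun n : ℕ => if -((n : ℤ) + 1) ∈
      Finset.Icc (-(N : ℤ)) (N : ℤ) then 0 else r ^ (-((n : ℤ) + 1)).natAbs) N
      (g := r ^ (N + 1) / (1 - r))).mp ((hgeo (N + 1)).congr_fun fun n => ?_)
    · rw [Finset.sum_eq_zero, add_zero] at h
      · exact h
      · intro i hi
        rw [if_pos]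
        simp only [Finset.mem_range, Finset.mem_Icc] at *
        omega
    · rw [if_neg]
      · congr 1
      · simp only [Finset.mem_Icc]
        omega

/-- A function analytic and bounded in a strip is approximated at a geometric rate by
trigonometric polynomials. -/
lemma exists_isTrigPoly_norm_sub_le {ρ M : ℝ} (hρ : 0 < ρ) {f : ℝ → ℂ}
    (hfp : Function.Periodic f (2 * π)) {F : ℂ → ℂ} (hFf : ∀ t : ℝ, F t = f t)
    (hFd : DifferentiableOn ℂ F {z : ℂ | |z.im| < ρ})
    (hFb : ∀ z : ℂ, |z.im| < ρ → ‖F z‖ ≤ M) (N : ℕ) :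
    ∃ q : ℝ → ℂ, IsTrigPoly N q ∧
      ∀ t, ‖f t - q t‖ ≤ 2 * M * (Real.exp (-ρ * N) / (Real.exp ρ - 1)) := by
  have hpi := Real.pi_pos
  have hcont := continuous_of_eq_on_strip hρ hFf hFd
  have hFp : ∀ t : ℝ, F (t + (2 * π : ℝ)) = F t := by
    intro t
    rw [← Complex.ofReal_add, hFf, hFf, hfp t]
  set r := Real.exp (-ρ) with hr
  have hr0 : 0 < r := Real.exp_pos _
  have hr1 : r < 1 := Real.exp_zero ▸ Real.exp_lt_exp.mpr (by linarith)
  set c : ℤ → ℂ := fun n =>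
    (2 * π : ℂ)⁻¹ * ∫ t in (-π)..π, Complex.exp (-(Complex.I * n * t)) * f t with hc
  have hcb : ∀ n, ‖c n‖ ≤ M * r ^ n.natAbs := by
    intro n
    have h1 := norm_integral_exp_mul_le hρ hFd hFp hFb n
    simp only [hFf] at h1
    have h2 : ‖(2 * π : ℂ)⁻¹‖ = (2 * π)⁻¹ := by
      simp [abs_of_pos hpi]
    rw [hc, norm_mul, h2, inv_mul_le_iff₀ (by positivity)]
    exact h1
  have hsum : Summable c := by
    have htail := ((hasSum_geometric_tail hr0.le hr1 0).mul_left M).summable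
    refine Summable.of_norm_bounded_eventually htail ?_
    refine (Set.finite_singleton (0 : ℤ)).subset fun n hn => ?_
    by_contra hne
    refine hn ?_
    rw [Set.mem_ofPred_eq, if_neg]
    · exact hcb n
    · simp only [Finset.mem_Icc]
      have : n ≠ 0 := hne
      omega
  have hseries : ∀ t ∈ Set.Icc (-π) π,
      HasSum (fun n : ℤ => c n * Complex.exp (Complex.I * n * t)) (f t) := fun t ht =>
    hasSum_fourier_of_summable hcont.continuousOn
      (by rw [← hfp (-π)]; congr 1; ring)
      (fun n => by
        rw [hc, mul_inv_cancel_left₀]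
        exact_mod_cast (by positivity : 2 * π ≠ 0)) hsum ht
  have hconst : M * (2 * (r ^ (N + 1) / (1 - r))) =
      2 * M * (Real.exp (-ρ * N) / (Real.exp ρ - 1)) := by
    have e1 : Real.exp ρ = r⁻¹ := by rw [hr, Real.exp_neg, inv_inv]
    have e2 : Real.exp (-ρ * N) = r ^ N := by rw [hr, ← Real.exp_nat_mul, mul_comm]
    rw [e1, e2]
    have : 1 - r ≠ 0 := by linarith
    have h3 : r⁻¹ - 1 = (1 - r) / r := by field_simp
    rw [h3, pow_succ]
    field_simp
  set q : ℝ → ℂ := fun t => ∑ k ∈ Finset.Icc (-(N : ℤ)) (N : ℤ),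
    c k * Complex.exp (Complex.I * (k : ℂ) * (t : ℂ)) with hq
  have hqp : Function.Periodic q (2 * π) := by
    intro t
    refine Finset.sum_congr rfl fun k _ => ?_
    congr 1
    rw [Complex.exp_eq_exp_iff_exists_int]
    refine ⟨k, ?_⟩
    push_cast
    ring
  refine ⟨q, ⟨c, fun t => rfl⟩, fun t => ?_⟩
  have hIcc : ∀ t ∈ Set.Icc (-π) π,
      ‖f t - q t‖ ≤ 2 * M * (Real.exp (-ρ * N) / (Real.exp ρ - 1)) := by
    intro t ht
    rw [← hconst]
    have hfin : HasSum (fun n : ℤ => if n ∈ Finset.Icc (-(N : ℤ)) (N : ℤ) then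
        c n * Complex.exp (Complex.I * n * t) else 0) (q t) := by
      have h1 := hasSum_sum_of_ne_finset_zero (L := .unconditional ℤ)
        (s := Finset.Icc (-(N : ℤ)) (N : ℤ))
        (f := fun n : ℤ => if n ∈ Finset.Icc (-(N : ℤ)) (N : ℤ) then
          c n * Complex.exp (Complex.I * n * t) else 0) (fun n hn => if_neg hn)
      rwa [Finset.sum_congr rfl fun n hn => if_pos hn] at h1
    refine ((hseries t ht).sub hfin).norm_le_of_bounded
      ((hasSum_geometric_tail hr0.le hr1 N).mul_left M) fun n => ?_
    by_cases hn : n ∈ Finset.Icc (-(N : ℤ)) (N : ℤ)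
    · simp only [if_pos hn, sub_self, norm_zero, mul_zero, le_refl]
    · simp only [if_neg hn, sub_zero, norm_mul]
      rw [show Complex.I * n * t = ((n * t : ℝ) : ℂ) * Complex.I by push_cast; ring,
        Complex.norm_exp_ofReal_mul_I, mul_one]
      exact hcb n
  obtain ⟨s, hs, hst⟩ := (hfp.sub hqp).exists_mem_Ico (by positivity) t (-π)
  simp only [Pi.sub_apply] at hst
  rw [hst]
  exact hIcc s ⟨hs.1, by linarith [hs.2]⟩

/-- geometric rate of convergence of quadrature at α-perturbed nodes
(α < 1/4) for periodic functions analytic and bounded by M in a strip of half-width ρ₀. -/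
theorem quadrature_rate_analytic (ρ₀ M : ℝ) (hρ₀ : 0 < ρ₀) (hM : 0 < M)
    (f : ℝ → ℂ) (hfp : Function.Periodic f (2*π))
    (F : ℂ → ℂ) (hFf : ∀ t : ℝ, F t = f t)
    (hFd : DifferentiableOn ℂ F {z : ℂ | |z.im| < ρ₀})
    (hFb : ∀ z : ℂ, |z.im| < ρ₀ → ‖F z‖ ≤ M)
    (α : ℝ) (hα0 : 0 ≤ α) (hα : α < 1/4) (N : ℕ) (hN : 0 < N)
    (x : ℤ → ℝ) (hx : PerturbedNodes N α x)
    (w : ℤ → ℝ) (hw : ExactQuad N x w) :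
    ‖(∑ j ∈ Finset.Icc (-(N:ℤ)) (N:ℤ), (w j : ℂ) * f (x j)) - ∫ t in (-π)..π, f t‖ ≤
      (16 * M * π / (Real.cos (π*α) - Real.sin (π*α))) *
        (Real.exp (-ρ₀ * N) / (Real.exp ρ₀ - 1)) := by
  obtain ⟨q, hq, hfq⟩ := exists_isTrigPoly_norm_sub_le hρ₀ hfp hFf hFd hFb N
  have hpi := Real.pi_pos
  set R := Real.exp (-ρ₀ * N) / (Real.exp ρ₀ - 1) with hR
  have hR0 : 0 ≤ R := div_nonneg (Real.exp_pos _).le (by linarith [Real.add_one_le_exp ρ₀])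
  set D := Real.cos (π * α) - Real.sin (π * α) with hD
  have hD0 : 0 < D := by
    rw [hD, sub_pos, ← Real.cos_pi_div_two_sub]
    exact Real.cos_lt_cos_of_nonneg_of_le_pi (by positivity) (by nlinarith) (by nlinarith)
  have hD1 : D ≤ 1 := by
    have := sin_pi_mul_nonneg hα0 hα.le
    linarith [Real.cos_le_one (π * α)]
  have hW : ∑ j ∈ Finset.Icc (-(N : ℤ)) (N : ℤ), |w j| ≤ 2 * π / D := by
    rw [le_div_iff₀ hD0]
    exact sum_abs_weight_mul_le hα0 hα.le hx hw
  have hfc := continuous_of_eq_on_strip hρ₀ hFf hFd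
  have hqc : Continuous q := by
    obtain ⟨c, hc⟩ := hq
    rw [show q = _ from funext hc]
    fun_prop
  have e : (∑ j ∈ Finset.Icc (-(N : ℤ)) (N : ℤ), (w j : ℂ) * f (x j)) - ∫ t in (-π)..π, f t =
      (∑ j ∈ Finset.Icc (-(N : ℤ)) (N : ℤ), (w j : ℂ) * (f (x j) - q (x j))) -
        ∫ t in (-π)..π, (f t - q t) := by
    rw [intervalIntegral.integral_sub (hfc.intervalIntegrable _ _) (hqc.intervalIntegrable _ _),
      ← hw q hq]
    simp only [mul_sub, Finset.sum_sub_distrib]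
    ring
  have h1 : ‖∑ j ∈ Finset.Icc (-(N : ℤ)) (N : ℤ), (w j : ℂ) * (f (x j) - q (x j))‖ ≤
      2 * π / D * (2 * M * R) := by
    refine (norm_sum_le _ _).trans ?_
    refine le_trans (Finset.sum_le_sum fun j _ => ?_)
      ((Finset.sum_mul _ _ _).symm.le.trans (mul_le_mul_of_nonneg_right hW (by positivity)))
    rw [norm_mul, Complex.norm_real, Real.norm_eq_abs]
    exact mul_le_mul_of_nonneg_left (hfq _) (abs_nonneg _)
  have h2 : ‖∫ t in (-π)..π, (f t - q t)‖ ≤ 2 * π / D * (2 * M * R) := by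
    refine (intervalIntegral.norm_integral_le_of_norm_le_const (C := 2 * M * R)
      fun t _ => hfq t).trans ?_
    rw [show π - -π = 2 * π by ring, abs_of_pos (by positivity), mul_comm]
    gcongr
    rw [le_div_iff₀ hD0]
    nlinarith
  rw [e]
  refine (norm_sub_le _ _).trans ((add_le_add h1 h2).trans ?_)
  have h3 : 16 * M * π / D * R =
      2 * π / D * (2 * M * R) + 2 * π / D * (2 * M * R) + 8 * M * π / D * R := by ring
  have h4 : 0 ≤ 8 * M * π / D * R := by positivity
  linarith
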